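/- arXiv:2601.12881 — 5 statements merged into one kernel-verified Lean document; each statement's English description precedes it below -/
import Mathlib

section
/- For every 1 ≤ i ≤ N−2, the Demazure–Lusztig operators satisfy the braid relation T_i ∘ T_{i+1} ∘ T_i = T_{i+1} ∘ T_i ∘ T_{i+1} as F-linear operators on F[x_1,…,x_N]. -/
open MvPolynomial

noncomputable section

/-- `Frac` is the field `F = ℂ(t)` of rational functions over `ℂ`. -/
abbrev Frac : Type := RatFunc ℂ

/-- The polynomial ring `R = F[x_1, …, x_N]`. -/
abbrev Pol (N : ℕ) : Type := MvPolynomial (Fin N) Frac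

/-- The parameter `t ∈ F = ℂ(t)`. -/
def tF : Frac := RatFunc.X

/-- `si N i hi` is the `F`-algebra automorphism of `F[x_1,…,x_N]` exchanging the variables
in positions `i` and `i+1` (0-indexed) and fixing all other variables. -/
def si (N i : ℕ) (hi : i + 1 < N) : Pol N → Pol N :=
  rename (⇑(Equiv.swap (⟨i, Nat.lt_of_succ_lt hi⟩ : Fin N) ⟨i + 1, hi⟩))

/-- `IsDemazureLusztig N i hi T` asserts that the `F`-linear map `T` satisfies the identity
`(x_i - x_{i+1}) · T(P) = (t-1)·(x_i·P - x_{i+1}·s_i(P)) + (x_i - x_{i+1})·s_i(P)`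
for all `P`, which uniquely characterizes the Demazure–Lusztig operator `T_i`. -/
def IsDemazureLusztig (N i : ℕ) (hi : i + 1 < N) (T : Pol N →ₗ[Frac] Pol N) : Prop :=
  ∀ P : Pol N,
    (X (⟨i, Nat.lt_of_succ_lt hi⟩ : Fin N) - X ⟨i + 1, hi⟩) * T P =
      (C tF - 1) * (X (⟨i, Nat.lt_of_succ_lt hi⟩ : Fin N) * P
          - X (⟨i + 1, hi⟩ : Fin N) * si N i hi P)
        + (X (⟨i, Nat.lt_of_succ_lt hi⟩ : Fin N) - X ⟨i + 1, hi⟩) * si N i hi P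

/-!
Over the total fraction ring, the Demazure–Lusztig operator exchanging `x` and `y` is
`a(x, y) + b(x, y) s` with `a(x, y) = (t - 1) x / (x - y)` and `b(x, y) = (x - t y) / (x - y)`.
Pushing the reflections to the right in a triple product leaves one coefficient for each of
`1, s₁, s₂, s₁s₂, s₂s₁, s₁s₂s₁`, so the braid relation becomes a comparison of six coefficients.
Three of them agree by symmetry, the other three by the Yang–Baxter identity
`a(x, y) a(y, z) + a(y, x) a(x, z) = a(x, z) a(y, z)`, the skew relation
`a(x, y) + a(y, x) = t - 1` and unitarity, `b(x, y) b(y, x) - a(x, y) a(y, x) = t`.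
-/

section ReflectionOperator

variable {K : Type*} [CommRing K]

/-- The operator `a + b s` on a commutative ring: multiplication by `a` plus the automorphism `s`
followed by multiplication by `b`. -/
def reflectionOp (s : K ≃+* K) (a b q : K) : K := a * q + b * s q

theorem reflectionOp_sandwich {s₁ : K ≃+* K} (hs₁ : s₁ * s₁ = 1) (s₂ : K ≃+* K)
    (a₁ b₁ a₂ b₂ q : K) :
    reflectionOp s₁ a₁ b₁ (reflectionOp s₂ a₂ b₂ (reflectionOp s₁ a₁ b₁ q)) =
      (a₁ * a₂ * a₁ + b₁ * s₁ a₂ * s₁ b₁) * q + (a₁ * a₂ + s₁ a₂ * s₁ a₁) * b₁ * s₁ q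
        + a₁ * b₂ * s₂ a₁ * s₂ q + b₁ * s₁ b₂ * s₁ (s₂ a₁) * s₁ (s₂ q)
        + a₁ * b₂ * s₂ b₁ * s₂ (s₁ q) + b₁ * s₁ b₂ * s₁ (s₂ b₁) * s₁ (s₂ (s₁ q)) := by
  have hs₁q : s₁ (s₁ q) = q := DFunLike.congr_fun hs₁ q
  simp only [reflectionOp, map_add, map_mul, hs₁q]
  ring

theorem reflectionOp_braid {s₁ s₂ : K ≃+* K} (hs₁ : s₁ * s₁ = 1) (hs₂ : s₂ * s₂ = 1)
    (hs : s₁ * s₂ * s₁ = s₂ * s₁ * s₂) {a₁ b₁ a₂ b₂ : K}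
    (ha : s₁ a₂ = s₂ a₁) (hb : s₁ b₂ = s₂ b₁)
    (hyb₁ : a₁ * a₂ + s₁ a₂ * s₁ a₁ = s₁ a₂ * a₂) (hyb₂ : a₁ * a₂ + s₂ a₁ * s₂ a₂ = s₂ a₁ * a₁)
    (hunit : b₁ * s₁ b₁ - a₁ * s₁ a₁ = b₂ * s₂ b₂ - a₂ * s₂ a₂) (q : K) :
    reflectionOp s₁ a₁ b₁ (reflectionOp s₂ a₂ b₂ (reflectionOp s₁ a₁ b₁ q)) =
      reflectionOp s₂ a₂ b₂ (reflectionOp s₁ a₁ b₁ (reflectionOp s₂ a₂ b₂ q)) := by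
  have invol₁ (p : K) : s₁ (s₁ p) = p := DFunLike.congr_fun hs₁ p
  have invol₂ (p : K) : s₂ (s₂ p) = p := DFunLike.congr_fun hs₂ p
  have braid : s₁ (s₂ (s₁ q)) = s₂ (s₁ (s₂ q)) := DFunLike.congr_fun hs q
  have coeff_one : a₁ * a₂ * a₁ + b₁ * s₂ a₁ * s₁ b₁ = a₂ * a₁ * a₂ + b₂ * s₂ a₁ * s₂ b₂ := by
    rw [ha] at hyb₁
    linear_combination a₁ * hyb₁ - a₂ * hyb₂ + s₂ a₁ * hunit
  rw [reflectionOp_sandwich hs₁, reflectionOp_sandwich hs₂, hyb₁, mul_comm a₂ a₁, hyb₂, ← ha, ← hb,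
    invol₁, invol₁, ha, hb, invol₂, invol₂, braid]
  linear_combination q * coeff_one

end ReflectionOperator

section Coefficients

open Ring

theorem map_ringInverse_of_isUnit {M₀ M₀' F : Type*} [MonoidWithZero M₀] [MonoidWithZero M₀']
    [FunLike F M₀ M₀'] [MonoidHomClass F M₀ M₀'] (f : F) {x : M₀} (hx : IsUnit x) :
    f x⁻¹ʳ = (f x)⁻¹ʳ := by
  obtain ⟨u, rfl⟩ := hx
  rw [inverse_unit]
  exact (inverse_unit (Units.map (f : M₀ →* M₀') u)).symm

variable {K : Type*} [CommRing K] (t x y z : K)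

/-- The coefficient `(t - 1) x / (x - y)` of the identity in the Demazure–Lusztig operator
exchanging `x` and `y`; meaningful only when `x - y` is a unit. -/
def idCoeff : K := (t - 1) * x * (x - y)⁻¹ʳ

/-- The coefficient `(x - t y) / (x - y)` of the reflection in the Demazure–Lusztig operator
exchanging `x` and `y`; meaningful only when `x - y` is a unit. -/
def swapCoeff : K := (x - t * y) * (x - y)⁻¹ʳ

variable {t x y z}

theorem map_idCoeff {L F : Type*} [CommRing L] [FunLike F K L] [RingHomClass F K L] (f : F)
    (hxy : IsUnit (x - y)) : f (idCoeff t x y) = idCoeff (f t) (f x) (f y) := by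
  simp only [idCoeff, map_mul, map_sub, map_one, map_ringInverse_of_isUnit f hxy]

theorem map_swapCoeff {L F : Type*} [CommRing L] [FunLike F K L] [RingHomClass F K L] (f : F)
    (hxy : IsUnit (x - y)) : f (swapCoeff t x y) = swapCoeff (f t) (f x) (f y) := by
  simp only [swapCoeff, map_mul, map_sub, map_ringInverse_of_isUnit f hxy]

theorem sub_mul_idCoeff (hxy : IsUnit (x - y)) : (x - y) * idCoeff t x y = (t - 1) * x := by
  rw [idCoeff, mul_left_comm, mul_inverse_cancel _ hxy, mul_one]

theorem sub_mul_swapCoeff (hxy : IsUnit (x - y)) : (x - y) * swapCoeff t x y = x - t * y := by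
  rw [swapCoeff, mul_left_comm, mul_inverse_cancel _ hxy, mul_one]

theorem idCoeff_add_idCoeff_swap (hxy : IsUnit (x - y)) :
    idCoeff t x y + idCoeff t y x = t - 1 := by
  have hyx : IsUnit (y - x) := IsUnit.sub_iff.mp hxy
  refine hxy.mul_left_cancel ?_
  linear_combination sub_mul_idCoeff (t := t) hxy - sub_mul_idCoeff (t := t) hyx

theorem swapCoeff_mul_swapCoeff_swap (hxy : IsUnit (x - y)) :
    swapCoeff t x y * swapCoeff t y x - idCoeff t x y * idCoeff t y x = t := by
  have hyx : IsUnit (y - x) := IsUnit.sub_iff.mp hxy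
  refine (hxy.mul hyx).mul_left_cancel ?_
  calc (x - y) * (y - x) *
        (swapCoeff t x y * swapCoeff t y x - idCoeff t x y * idCoeff t y x)
      = (x - y) * swapCoeff t x y * ((y - x) * swapCoeff t y x)
        - (x - y) * idCoeff t x y * ((y - x) * idCoeff t y x) := by ring
    _ = (x - t * y) * (y - t * x) - (t - 1) * x * ((t - 1) * y) := by
      simp only [sub_mul_idCoeff, sub_mul_swapCoeff, hxy, hyx]
    _ = (x - y) * (y - x) * t := by ring

theorem idCoeff_yangBaxter (hxy : IsUnit (x - y)) (hxz : IsUnit (x - z)) (hyz : IsUnit (y - z)) :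
    idCoeff t x y * idCoeff t y z + idCoeff t y x * idCoeff t x z =
      idCoeff t x z * idCoeff t y z := by
  have hyx : IsUnit (y - x) := IsUnit.sub_iff.mp hxy
  refine ((hxy.mul hxz).mul hyz).mul_left_cancel ?_
  calc (x - y) * (x - z) * (y - z) *
        (idCoeff t x y * idCoeff t y z + idCoeff t y x * idCoeff t x z)
      = (x - z) * ((x - y) * idCoeff t x y) * ((y - z) * idCoeff t y z)
        - (y - z) * ((y - x) * idCoeff t y x) * ((x - z) * idCoeff t x z) := by ring
    _ = (x - y) * ((t - 1) * x) * ((t - 1) * y) := by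
      simp only [sub_mul_idCoeff, hxy, hyx, hxz, hyz]
      ring
    _ = (x - y) * ((x - z) * idCoeff t x z) * ((y - z) * idCoeff t y z) := by
      simp only [sub_mul_idCoeff, hxz, hyz]
    _ = (x - y) * (x - z) * (y - z) * (idCoeff t x z * idCoeff t y z) := by ring

theorem idCoeff_yangBaxter' (hxy : IsUnit (x - y)) (hxz : IsUnit (x - z)) (hyz : IsUnit (y - z)) :
    idCoeff t x y * idCoeff t y z + idCoeff t x z * idCoeff t z y =
      idCoeff t x z * idCoeff t x y := by
  linear_combination idCoeff_yangBaxter (t := t) hxy hxz hyz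
    + idCoeff t x z * idCoeff_add_idCoeff_swap (t := t) hyz
    - idCoeff t x z * idCoeff_add_idCoeff_swap (t := t) hxy

theorem reflectionOp_coeff_braid {s₁ s₂ : K ≃+* K} (hs₁ : s₁ * s₁ = 1) (hs₂ : s₂ * s₂ = 1)
    (hs : s₁ * s₂ * s₁ = s₂ * s₁ * s₂) (ht₁ : s₁ t = t) (ht₂ : s₂ t = t)
    (hx₁ : s₁ x = y) (hz₁ : s₁ z = z) (hx₂ : s₂ x = x) (hy₂ : s₂ y = z)
    (hxy : IsUnit (x - y)) (hxz : IsUnit (x - z)) (hyz : IsUnit (y - z)) (q : K) :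
    letI D₁ := reflectionOp s₁ (idCoeff t x y) (swapCoeff t x y)
    letI D₂ := reflectionOp s₂ (idCoeff t y z) (swapCoeff t y z)
    D₁ (D₂ (D₁ q)) = D₂ (D₁ (D₂ q)) := by
  have hy₁ : s₁ y = x := hx₁ ▸ DFunLike.congr_fun hs₁ x
  have hz₂ : s₂ z = y := hy₂ ▸ DFunLike.congr_fun hs₂ y
  apply reflectionOp_braid hs₁ hs₂ hs <;>
    simp only [map_idCoeff, map_swapCoeff, hxy, hyz, ht₁, ht₂, hx₁, hy₁, hz₁, hx₂, hy₂, hz₂]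
  · rw [mul_comm (idCoeff t x z), idCoeff_yangBaxter hxy hxz hyz]
  · exact idCoeff_yangBaxter' hxy hxz hyz
  · rw [swapCoeff_mul_swapCoeff_swap hxy, swapCoeff_mul_swapCoeff_swap hyz]

end Coefficients

section DemazureLusztig

open nonZeroDivisors

variable {A : Type*} [CommRing A]

/-- The defining identity of the Demazure–Lusztig operator with parameter `t`, for a map `s` of
any commutative ring that exchanges `x` and `y`. `IsDemazureLusztig` is the case of two adjacent
variables over `Frac`. -/
def IsDemazureLusztigFor (s : A → A) (t x y : A) (T : A → A) : Prop :=
  ∀ p, (x - y) * T p = (t - 1) * (x * p - y * s p) + (x - y) * s p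

namespace IsDemazureLusztigFor

variable {t x y z : A}

theorem algebraMap_apply (K : Type*) [CommRing K] [Algebra A K] [IsFractionRing A K]
    {s : A ≃+* A} {T : A → A} (hT : IsDemazureLusztigFor s t x y T) (hxy : x - y ∈ A⁰) (p : A) :
    letI ι := algebraMap A K
    ι (T p) = reflectionOp (IsFractionRing.ringEquivOfRingEquivHom A K s)
      (idCoeff (ι t) (ι x) (ι y)) (swapCoeff (ι t) (ι x) (ι y)) (ι p) := by
  have hunit : IsUnit (algebraMap A K x - algebraMap A K y) := by
    simpa only [map_sub] using IsLocalization.map_units K ⟨x - y, hxy⟩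
  have hTp := congrArg (algebraMap A K) (hT p)
  simp only [map_add, map_sub, map_mul, map_one] at hTp
  refine hunit.mul_left_cancel ?_
  rw [reflectionOp, IsFractionRing.ringEquivOfRingEquivHom_apply,
    IsFractionRing.ringEquivOfRingEquiv_algebraMap]
  linear_combination hTp - algebraMap A K p * sub_mul_idCoeff (t := algebraMap A K t) hunit
    - algebraMap A K (s p) * sub_mul_swapCoeff (t := algebraMap A K t) hunit

theorem braid {s₁ s₂ : A ≃+* A} (hs₁ : s₁ * s₁ = 1) (hs₂ : s₂ * s₂ = 1)
    (hs : s₁ * s₂ * s₁ = s₂ * s₁ * s₂) (ht₁ : s₁ t = t) (ht₂ : s₂ t = t)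
    (hx₁ : s₁ x = y) (hz₁ : s₁ z = z) (hx₂ : s₂ x = x) (hy₂ : s₂ y = z)
    (hxy : x - y ∈ A⁰) (hxz : x - z ∈ A⁰) (hyz : y - z ∈ A⁰) {T₁ T₂ : A → A}
    (hT₁ : IsDemazureLusztigFor s₁ t x y T₁) (hT₂ : IsDemazureLusztigFor s₂ t y z T₂) (p : A) :
    T₁ (T₂ (T₁ p)) = T₂ (T₁ (T₂ p)) := by
  let K := FractionRing A
  let φ := IsFractionRing.ringEquivOfRingEquivHom A K
  have map_eq {s : A ≃+* A} {v w : A} (h : s v = w) : φ s (algebraMap A K v) = algebraMap A K w :=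
    h ▸ IsFractionRing.ringEquivOfRingEquiv_algebraMap s v
  have isUnit_sub {v w : A} (h : v - w ∈ A⁰) : IsUnit (algebraMap A K v - algebraMap A K w) := by
    simpa only [map_sub] using IsLocalization.map_units K ⟨v - w, h⟩
  apply IsFractionRing.injective A K
  simp only [hT₁.algebraMap_apply K hxy, hT₂.algebraMap_apply K hyz]
  exact reflectionOp_coeff_braid (by rw [← map_mul, hs₁, map_one]) (by rw [← map_mul, hs₂, map_one])
    (by simp only [← map_mul, hs]) (map_eq ht₁) (map_eq ht₂) (map_eq hx₁) (map_eq hz₁)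
    (map_eq hx₂) (map_eq hy₂) (isUnit_sub hxy) (isUnit_sub hxz) (isUnit_sub hyz) _

end IsDemazureLusztigFor

end DemazureLusztig

section Polynomials

variable {k σ : Type*} [CommRing k]

theorem X_sub_X_mem_nonZeroDivisors {i j : σ} (hij : i ≠ j) :
    (X i - X j : MvPolynomial σ k) ∈ nonZeroDivisors (MvPolynomial σ k) := by
  classical
  let shift (f : MvPolynomial σ k) : MvPolynomial σ k →ₐ[k] MvPolynomial σ k :=
    aeval (Function.update X i f)
  have shift_comp_shift : (shift (X i - X j)).comp (shift (X i + X j)) = AlgHom.id k _ := by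
    ext l : 1
    by_cases hl : l = i <;> simp [shift, hl, hij.symm]
  have shift_leftInverse : Function.LeftInverse (shift (X i - X j)) (shift (X i + X j)) := by
    intro p
    rw [← AlgHom.comp_apply, shift_comp_shift, AlgHom.id_apply]
  have shift_X_sub_X : shift (X i + X j) (X i - X j) = X i := by
    simp [shift, hij.symm]
  refine mem_nonZeroDivisors_of_injective shift_leftInverse.injective ?_
  rw [shift_X_sub_X]
  exact isRegular_X.mem_nonZeroDivisors

variable [DecidableEq σ]

theorem swap_braid {a b c : σ} (hab : a ≠ b) (hac : a ≠ c) (hbc : b ≠ c) :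
    Equiv.swap a b * Equiv.swap b c * Equiv.swap a b =
      Equiv.swap b c * Equiv.swap a b * Equiv.swap b c := by
  rw [Equiv.swap_mul_swap_mul_swap hab hac, Equiv.swap_comm a b, Equiv.swap_comm b c,
    Equiv.swap_mul_swap_mul_swap hbc.symm hac.symm, Equiv.swap_comm]

variable (k) in
/-- Permutations of the variables acting by ring automorphisms on the polynomial ring. -/
def renameHom : Equiv.Perm σ →* (MvPolynomial σ k ≃+* MvPolynomial σ k) where
  toFun e := (renameEquiv k e).toRingEquiv
  map_one' := by ext p : 1; exact rename_id_apply p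
  map_mul' e f := by ext p : 1; exact (rename_rename f e p).symm

theorem stmt_2_general {a b c : σ} (hab : a ≠ b) (hac : a ≠ c) (hbc : b ≠ c) (t : k)
    {T₁ T₂ : MvPolynomial σ k → MvPolynomial σ k}
    (hT₁ : IsDemazureLusztigFor (rename (Equiv.swap a b)) (C t) (X a) (X b) T₁)
    (hT₂ : IsDemazureLusztigFor (rename (Equiv.swap b c)) (C t) (X b) (X c) T₂)
    (P : MvPolynomial σ k) :
    T₁ (T₂ (T₁ P)) = T₂ (T₁ (T₂ P)) := by
  have rename_X_eq {i j l m : σ} (h : Equiv.swap i j l = m) :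
      renameHom k (Equiv.swap i j) (X l) = X m := h ▸ rename_X _ l
  refine IsDemazureLusztigFor.braid (s₁ := renameHom k (Equiv.swap a b))
    (s₂ := renameHom k (Equiv.swap b c)) ?_ ?_ ?_ (rename_C _ t) (rename_C _ t)
    (rename_X_eq (Equiv.swap_apply_left a b))
    (rename_X_eq (Equiv.swap_apply_of_ne_of_ne hac.symm hbc.symm))
    (rename_X_eq (Equiv.swap_apply_of_ne_of_ne hab hac)) (rename_X_eq (Equiv.swap_apply_left b c))
    (X_sub_X_mem_nonZeroDivisors hab) (X_sub_X_mem_nonZeroDivisors hac)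
    (X_sub_X_mem_nonZeroDivisors hbc) hT₁ hT₂ P
  · rw [← map_mul, Equiv.swap_mul_self, map_one]
  · rw [← map_mul, Equiv.swap_mul_self, map_one]
  · simp only [← map_mul, swap_braid hab hac hbc]

end Polynomials

/-- braid relation `T_i ∘ T_{i+1} ∘ T_i = T_{i+1} ∘ T_i ∘ T_{i+1}`
for the Demazure–Lusztig operators (here `T₁ = T_i`, `T₂ = T_{i+1}`). -/
theorem stmt_2 (N : ℕ) (hN : 3 ≤ N) (i : ℕ) (hi : i + 2 < N)
    (T₁ T₂ : Pol N →ₗ[Frac] Pol N)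
    (hT₁ : IsDemazureLusztig N i (Nat.lt_of_succ_lt hi) T₁)
    (hT₂ : IsDemazureLusztig N (i + 1) hi T₂)
    (P : Pol N) :
    T₁ (T₂ (T₁ P)) = T₂ (T₁ (T₂ P)) := by
  refine stmt_2_general ?_ ?_ ?_ tF hT₁ hT₂ P <;> simp only [ne_eq, Fin.mk.injEq] <;> omega
end
end

section
/- Let a, b ≥ 1 be integers and c, d be natural numbers. Then 1 − q^a t^b divides 1 − q^c t^d in ℂ[q,t] if and only if there exists a natural number r such that c = r·a and d = r·b. -/
open MvPolynomial

noncomputable section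

/-- `CQT` is the polynomial ring `ℂ[q,t]` in two indeterminates over `ℂ`. -/
abbrev CQT : Type := MvPolynomial (Fin 2) ℂ

/-- The indeterminate `q` of `ℂ[q,t]`. -/
def qP : CQT := X 0

/-- The indeterminate `t` of `ℂ[q,t]`. -/
def tP : CQT := X 1

/-!
If `φ` is an `m`-periodic function on the exponents, the linear functional on the monoid algebra
extending `x ^ p ↦ φ p` is invariant under multiplication by `x ^ m`, so it kills every multiple of
`1 - x ^ m`. Hence `1 - x ^ m ∣ 1 - x ^ n` forces `φ n = φ 0`. When the exponents form a
cancellative monoid with no invertible element but `0`, the indicator function of `{0, m, 2m, …}`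
is `m`-periodic, and this choice of `φ` shows that `n` is a multiple of `m`.
-/

theorem add_mem_multiples_iff {M : Type*} [AddCommMonoid M] [IsCancelAdd M]
    [Subsingleton (AddUnits M)] {m p : M} :
    p + m ∈ AddSubmonoid.multiples m ↔ p ∈ AddSubmonoid.multiples m := by
  refine ⟨?_, fun hp ↦ add_mem hp (AddSubmonoid.mem_multiples m)⟩
  rintro ⟨_ | k, hk : _ • m = p + m⟩
  · rw [zero_nsmul, eq_comm] at hk
    exact eq_zero_of_add_right hk ▸ zero_mem _
  · exact ⟨k, add_right_cancel ((succ_nsmul m k).symm.trans hk)⟩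

section MonoidAlgebra

open AddMonoidAlgebra (single single_mul_single single_pow)
open scoped AddMonoidAlgebra

variable {R M A : Type*} [AddCommMonoid M] {m n : M}

theorem linearCombination_coeff_single_one_mul [Semiring R] [AddCommMonoid A] [Module R A]
    {φ : M → A} (hφ : Function.Periodic φ m) (f : R[M]) :
    Finsupp.linearCombination R φ (single m 1 * f).coeff =
      Finsupp.linearCombination R φ f.coeff := by
  induction f using AddMonoidAlgebra.induction_linear with
  | zero => rw [mul_zero]
  | add f g hf hg => simp only [mul_add, AddMonoidAlgebra.coeff_add, map_add, hf, hg]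
  | single p r =>
    simp only [single_mul_single, one_mul, AddMonoidAlgebra.coeff_single,
      Finsupp.linearCombination_single, add_comm m p, hφ p]

theorem eq_of_one_sub_single_dvd_one_sub_single [Ring R] [AddCommGroup A] [Module R A]
    {φ : M → A} (hφ : Function.Periodic φ m)
    (h : (1 - single m 1 : R[M]) ∣ 1 - single n 1) :
    φ n = φ 0 := by
  obtain ⟨f, hf⟩ := h
  have hL : Finsupp.linearCombination R φ (1 - single n 1 : R[M]).coeff = 0 := by
    rw [hf, sub_mul, one_mul, AddMonoidAlgebra.coeff_sub, map_sub,
      linearCombination_coeff_single_one_mul hφ, sub_self]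
  simp only [AddMonoidAlgebra.one_def, AddMonoidAlgebra.coeff_sub, AddMonoidAlgebra.coeff_single,
    map_sub, Finsupp.linearCombination_single, one_smul] at hL
  exact (sub_eq_zero.mp hL).symm

theorem one_sub_single_dvd_one_sub_single_iff [Ring R] [Nontrivial R] [IsCancelAdd M]
    [Subsingleton (AddUnits M)] :
    (1 - single m 1 : R[M]) ∣ 1 - single n 1 ↔ n ∈ AddSubmonoid.multiples m := by
  classical
  constructor
  · intro h
    let φ : M → R := fun p ↦ if p ∈ AddSubmonoid.multiples m then 1 else 0
    have hφ : Function.Periodic φ m := fun p ↦ by simp only [φ, add_mem_multiples_iff]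
    have hn : φ n = 1 :=
      (eq_of_one_sub_single_dvd_one_sub_single hφ h).trans (if_pos (zero_mem _))
    by_contra hnm
    simp [φ, hnm] at hn
  · rintro ⟨r, rfl⟩
    have hpow : (single m 1 : R[M]) ^ r = single (r • m) 1 := by rw [single_pow, one_pow]
    exact ⟨_, hpow ▸ (mul_neg_geom_sum (single m 1) r).symm⟩

end MonoidAlgebra

theorem stmt_8_general {σ R : Type*} [CommRing R] [Nontrivial R] (m n : σ →₀ ℕ) :
    (1 - monomial m 1 : MvPolynomial σ R) ∣ 1 - monomial n 1 ↔ ∃ r : ℕ, n = r • m :=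
  one_sub_single_dvd_one_sub_single_iff.trans (exists_congr fun _ ↦ eq_comm)

theorem qP_pow_mul_tP_pow_eq_monomial (a b : ℕ) :
    qP ^ a * tP ^ b = monomial (Finsupp.single 0 a + Finsupp.single 1 b) 1 := by
  rw [monomial_add_single, ← X_pow_eq_monomial, qP, tP]

/-- for `a, b ≥ 1` and `c, d ∈ ℕ`, `1 - q^a t^b` divides `1 - q^c t^d` in
`ℂ[q,t]` iff there is `r ∈ ℕ` with `c = r·a` and `d = r·b`. -/
theorem stmt_8 (a b : ℕ) (ha : 1 ≤ a) (hb : 1 ≤ b) (c d : ℕ) :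
    (1 - qP ^ a * tP ^ b) ∣ (1 - qP ^ c * tP ^ d) ↔ ∃ r : ℕ, c = r * a ∧ d = r * b := by
  simp only [qP_pow_mul_tP_pow_eq_monomial, stmt_8_general]
  simp [Finsupp.ext_iff, Fin.forall_fin_two]
end
end

section
/- Every edge of the Yang–Baxter graph strictly increases the order ⊴: (i) if v ∈ ℕ^N and 1 ≤ i ≤ N−1 with v_i < v_{i+1}, then v ◁ v·s_i; (ii) for every v ∈ ℕ^N, v ◁ vΦ. -/
open Finset

/-- `u ≤_dom v`: for all `1 ≤ k ≤ N`, the sum of the first `k` entries of `u` is at most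
the sum of the first `k` entries of `v`. -/
def domLE (N : ℕ) (u v : Fin N → ℕ) : Prop :=
  ∀ k : ℕ, 1 ≤ k → k ≤ N →
    (∑ j : Fin N, if (j : ℕ) < k then u j else 0) ≤
      ∑ j : Fin N, if (j : ℕ) < k then v j else 0

/-- `decSort N u = u⁺` is the weakly decreasing rearrangement of `u`
(`Tuple.sort u` is the permutation sorting `u` increasingly; reversing indices yields the
weakly decreasing rearrangement). -/
noncomputable def decSort (N : ℕ) (u : Fin N → ℕ) : Fin N → ℕ :=
  fun j => u (Tuple.sort u j.rev)

/-- `u ⊴ v`: either (`u⁺ ≤_dom v⁺` and `u⁺ ≠ v⁺`) or (`u⁺ = v⁺` and `u ≤_dom v`). -/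
def triLE (N : ℕ) (u v : Fin N → ℕ) : Prop :=
  (domLE N (decSort N u) (decSort N v) ∧ decSort N u ≠ decSort N v) ∨
    (decSort N u = decSort N v ∧ domLE N u v)

/-- `u·s_i`: the vector `u` with its entries in positions `i` and `i+1` exchanged
(0-indexed). -/
def swapMove (N i : ℕ) (hi : i + 1 < N) (u : Fin N → ℕ) : Fin N → ℕ :=
  u ∘ ⇑(Equiv.swap (⟨i, Nat.lt_of_succ_lt hi⟩ : Fin N) ⟨i + 1, hi⟩)

/-- `uΦ = (u_2, u_3, …, u_N, u_1 + 1)`. -/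
def phi (N : ℕ) (u : Fin N → ℕ) : Fin N → ℕ :=
  fun j => if h : (j : ℕ) + 1 < N then u ⟨(j : ℕ) + 1, h⟩ else u ⟨0, j.pos⟩ + 1

/-- The edge relation of the Yang–Baxter graph on `ℕ^N`: an edge `u → u·s_i` whenever
`u_i < u_{i+1}`, and an edge `u → uΦ` for every `u`. -/
def ybEdge (N : ℕ) (u v : Fin N → ℕ) : Prop :=
  (∃ (i : ℕ) (hi : i + 1 < N),
      u ⟨i, Nat.lt_of_succ_lt hi⟩ < u ⟨i + 1, hi⟩ ∧ v = swapMove N i hi u) ∨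
    v = phi N u

/-!
An ascent `v_i < v_{i+1}` is exchanged inside a rearrangement class, so `v⁺` does not move and only
partial sums matter: the swap puts the larger entry first, which raises the partial sum ending
between the two positions and leaves every other one unchanged.

Up to the cyclic rotation of the positions, `Φ` adds one to a single entry. The map `u ↦ u⁺` is
rotation invariant. It is monotone for the entrywise order, since the `k`-th smallest entry is at
most `a` exactly when at least `k` entries are, and strictly so because it preserves the total.
Hence `v⁺` strictly increases.
-/

/-- The strict order `u ◁ v` underlying `⊴`. -/
def triLT (N : ℕ) (u v : Fin N → ℕ) : Prop :=
  triLE N u v ∧ u ≠ v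

theorem card_filter_comp_perm_le {ι α : Type*} [Fintype ι] [LE α] [DecidableLE α] (f : ι → α)
    (σ : Equiv.Perm ι) (a : α) : #{i | (f ∘ σ) i ≤ a} = #{i | f i ≤ a} :=
  card_equiv σ (by simp)

theorem comp_sort_mono {α : Type*} [LinearOrder α] {n : ℕ} :
    Monotone fun f : Fin n → α ↦ f ∘ Tuple.sort f := by
  intro f g hfg j
  set a := (g ∘ Tuple.sort g) j
  have hg : j < #{i | (g ∘ Tuple.sort g) i ≤ a} :=
    (Tuple.lt_card_le_iff_apply_le_of_monotone (Tuple.monotone_sort g)).2 le_rfl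
  have hcard : #{i | g i ≤ a} ≤ #{i | f i ≤ a} :=
    card_le_card (monotone_filter_right _ fun i _ hi ↦ (hfg i).trans hi)
  refine (Tuple.lt_card_le_iff_apply_le_of_monotone (Tuple.monotone_sort f)).1 ?_
  rw [card_filter_comp_perm_le] at hg ⊢
  exact hg.trans_le hcard

section Rearrangement

variable {N : ℕ} {u v : Fin N → ℕ}

theorem decSort_comp_perm (u : Fin N → ℕ) (σ : Equiv.Perm (Fin N)) :
    decSort N (u ∘ σ) = decSort N u :=
  funext fun j ↦ congrFun Tuple.comp_perm_comp_sort_eq_comp_sort j.rev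

theorem sum_decSort (u : Fin N → ℕ) : ∑ j, decSort N u j = ∑ j, u j :=
  Equiv.sum_comp (Fin.revPerm.trans (Tuple.sort u)) u

theorem decSort_mono : Monotone (decSort N) :=
  fun _ _ huv j ↦ comp_sort_mono huv j.rev

theorem decSort_strictMono : StrictMono (decSort N) := by
  intro u v huv
  refine (decSort_mono huv.le).lt_of_ne fun heq ↦ ?_
  have hsum : ∑ j, u j < ∑ j, v j := Fintype.sum_strictMono huv
  rw [← sum_decSort u, ← sum_decSort v, heq] at hsum
  exact hsum.false

theorem domLE_iff_sum_filter :
    domLE N u v ↔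
      ∀ k, 1 ≤ k → k ≤ N → ∑ j with j.val < k, u j ≤ ∑ j with j.val < k, v j := by
  simp only [domLE, sum_filter]

theorem domLE_of_le (huv : u ≤ v) : domLE N u v :=
  domLE_iff_sum_filter.2 fun _ _ _ ↦ sum_le_sum fun j _ ↦ huv j

theorem domLE_comp_swap {i j : Fin N} (hij : i ≤ j) (hu : u i ≤ u j) :
    domLE N u (u ∘ Equiv.swap i j) := by
  refine domLE_iff_sum_filter.2 fun k _ _ ↦ ?_
  by_cases hjk : j.val < k
  · have hsupp : {l | Equiv.swap i j l ≠ l} ⊆ ({l : Fin N | l.val < k} : Finset (Fin N)) := by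
      intro l hl
      obtain rfl | rfl := (Equiv.swap_apply_ne_self_iff.1 hl).2
      · simpa using (Fin.le_def.1 hij).trans_lt hjk
      · simpa using hjk
    exact ((Equiv.swap i j).sum_comp _ u hsupp).ge
  · refine sum_le_sum fun l hl ↦ ?_
    have hlj : l ≠ j := by
      rintro rfl
      exact hjk (mem_filter.1 hl).2
    obtain rfl | hli := eq_or_ne l i
    · simpa using hu
    · simp [Equiv.swap_apply_of_ne_of_ne hli hlj]

theorem triLT_of_decSort_lt (huv : decSort N u < decSort N v) : triLT N u v :=
  ⟨.inl ⟨domLE_of_le huv.le, huv.ne⟩, ne_of_apply_ne (decSort N) huv.ne⟩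

theorem triLT_comp_swap {i j : Fin N} (hij : i < j) (hu : u i < u j) :
    triLT N u (u ∘ Equiv.swap i j) := by
  refine ⟨.inr ⟨(decSort_comp_perm u _).symm, domLE_comp_swap hij.le hu.le⟩, fun heq ↦ hu.ne ?_⟩
  simpa using congrFun heq i

theorem phi_eq_comp_finRotate {n : ℕ} (v : Fin (n + 1) → ℕ) :
    phi (n + 1) v = (v + Pi.single 0 1) ∘ finRotate (n + 1) := by
  funext j
  induction j using Fin.lastCases with
  | last => simp [phi]
  | cast j => simp [phi, Fin.succ]

theorem triLT_phi {n : ℕ} (v : Fin (n + 1) → ℕ) : triLT (n + 1) v (phi (n + 1) v) := by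
  apply triLT_of_decSort_lt
  rw [phi_eq_comp_finRotate, decSort_comp_perm]
  exact decSort_strictMono (lt_add_of_pos_right v (Pi.single_pos.2 one_pos))

end Rearrangement

/-- every edge of the Yang–Baxter graph strictly increases `⊴`:
(i) if `v_i < v_{i+1}` then `v ◁ v·s_i`; (ii) `v ◁ vΦ`. -/
theorem stmt_16 (N : ℕ) (hN : 2 ≤ N) (v : Fin N → ℕ) :
    (∀ (i : ℕ) (hi : i + 1 < N), v ⟨i, Nat.lt_of_succ_lt hi⟩ < v ⟨i + 1, hi⟩ →
      triLE N v (swapMove N i hi v) ∧ v ≠ swapMove N i hi v) ∧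
    (triLE N v (phi N v) ∧ v ≠ phi N v) := by
  refine ⟨fun i hi hv ↦ triLT_comp_swap (Fin.mk_lt_mk.2 i.lt_succ_self) hv, ?_⟩
  obtain ⟨n, rfl⟩ := Nat.exists_eq_succ_of_ne_zero (Nat.ne_zero_of_lt hN)
  exact triLT_phi v
end

section
/- For every v ∈ ℕ^N there exists a path in the Yang–Baxter graph from the zero vector 0^N = (0,…,0) to v; that is, every vector of natural numbers is reachable from the zero vector by finitely many moves v ↦ v·s_i (allowed when v_i < v_{i+1}) and v ↦ vΦ. -/
open Finset

/-!
Edges are followed backwards from `v`, lowering the sum of the entries. A positive entry can be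
carried to the last position: if it exceeds its right neighbour, exchanging the two is the inverse
of an edge, and otherwise the right neighbour is itself positive. Once the last entry is positive
the vector is of the form `uΦ`, and `u` has smaller sum.
-/

section SwapMove

variable {N i : ℕ} (hi : i + 1 < N) (v : Fin N → ℕ)

theorem swapMove_swapMove : swapMove N i hi (swapMove N i hi v) = v := by
  funext j
  simp [swapMove]

theorem swapMove_apply_left :
    swapMove N i hi v ⟨i, Nat.lt_of_succ_lt hi⟩ = v ⟨i + 1, hi⟩ := by
  simp [swapMove]

theorem swapMove_apply_right :
    swapMove N i hi v ⟨i + 1, hi⟩ = v ⟨i, Nat.lt_of_succ_lt hi⟩ := by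
  simp [swapMove]

theorem sum_swapMove : ∑ j, swapMove N i hi v j = ∑ j, v j :=
  Equiv.sum_comp _ v

variable {v}

theorem ybEdge_swapMove_self (h : v ⟨i + 1, hi⟩ < v ⟨i, Nat.lt_of_succ_lt hi⟩) :
    ybEdge N (swapMove N i hi v) v := by
  refine Or.inl ⟨i, hi, ?_, (swapMove_swapMove hi v).symm⟩
  rwa [swapMove_apply_left, swapMove_apply_right]

end SwapMove

section Phi

variable {n : ℕ}

theorem phi_eq_snoc (u : Fin (n + 1) → ℕ) :
    phi (n + 1) u = Fin.snoc (Fin.tail u) (u 0 + 1) := by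
  funext j
  cases j using Fin.lastCases with
  | last => simp [phi]
  | cast j => simp [phi, Fin.tail, Fin.succ]

theorem sum_phi (u : Fin (n + 1) → ℕ) : ∑ j, phi (n + 1) u j = ∑ j, u j + 1 := by
  rw [phi_eq_snoc, Fin.sum_snoc, Fin.sum_univ_succ u]
  simp only [Fin.tail]
  ring

theorem exists_phi_eq {v : Fin (n + 1) → ℕ} (hv : 0 < v (Fin.last n)) :
    ∃ u, phi (n + 1) u = v := by
  refine ⟨Fin.cons (v (Fin.last n) - 1) (Fin.init v), ?_⟩
  rw [phi_eq_snoc, Fin.tail_cons, Fin.cons_zero, Nat.sub_add_cancel hv, Fin.snoc_init_self]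

end Phi

theorem exists_reflTransGen_ybEdge_last_pos {n : ℕ} (p : Fin (n + 1)) {v : Fin (n + 1) → ℕ}
    (hp : 0 < v p) :
    ∃ w, 0 < w (Fin.last n) ∧ ∑ j, w j = ∑ j, v j ∧
      Relation.ReflTransGen (ybEdge (n + 1)) w v := by
  induction p using Fin.reverseInduction generalizing v with
  | last => exact ⟨v, hp, rfl, .refl⟩
  | cast i ih =>
    have hi : (i : ℕ) + 1 < n + 1 := i.succ.isLt
    by_cases hlt : v i.succ < v i.castSucc
    · have hpos : 0 < swapMove (n + 1) i hi v i.succ := (swapMove_apply_right hi v).symm ▸ hp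
      obtain ⟨w, hw, hsum, hpath⟩ := ih hpos
      exact ⟨w, hw, hsum.trans (sum_swapMove hi v), hpath.tail (ybEdge_swapMove_self hi hlt)⟩
    · exact ih (hp.trans_le (not_lt.mp hlt))

theorem exists_reflTransGen_ybEdge_sum_lt {N : ℕ} {v : Fin N → ℕ} (hv : v ≠ 0) :
    ∃ u, ∑ j, u j < ∑ j, v j ∧ Relation.ReflTransGen (ybEdge N) u v := by
  obtain ⟨p, hp⟩ := Function.ne_iff.mp hv
  obtain ⟨n, rfl⟩ := Nat.exists_eq_add_one.mpr p.pos
  obtain ⟨w, hw, hsum, hpath⟩ := exists_reflTransGen_ybEdge_last_pos p (Nat.pos_of_ne_zero hp)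
  obtain ⟨u, rfl⟩ := exists_phi_eq hw
  have hlt : ∑ j, u j < ∑ j, v j := by
    rw [← hsum, sum_phi]
    exact Nat.lt_succ_self _
  exact ⟨u, hlt, hpath.head (Or.inr rfl)⟩

/-- every `v ∈ ℕ^N` is reachable in the Yang–Baxter graph from the zero
vector `0^N`. -/
theorem stmt_17 (N : ℕ) (hN : 2 ≤ N) (v : Fin N → ℕ) :
    Relation.ReflTransGen (ybEdge N) (fun _ => 0) v := by
  induction hs : ∑ j, v j using Nat.strong_induction_on generalizing v with
  | _ s ih =>
    obtain rfl | hv := eq_or_ne v 0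
    · exact .refl
    · obtain ⟨u, hlt, hpath⟩ := exists_reflTransGen_ybEdge_sum_lt hv
      exact (ih _ (hs ▸ hlt) u rfl).trans hpath
end

section
/- For every 1 ≤ i ≤ N−1 and every polynomial P in F[x_1,…,x_N], the Demazure–Lusztig operator satisfies the Bernstein–Lusztig-type relation T_i(x_{i+1}·T_i(P)) = t·x_i·P; that is, as operators, T_i ∘ X_{i+1} ∘ T_i = t·X_i, where X_j denotes multiplication by the variable x_j. -/
open MvPolynomial

noncomputable section

/-!
Let `σ` exchange `x` and `y`. Expanding the definition of `T` gives the cross relation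
`T (y f) = x (T f - (q - 1) f)`. Moreover `T f + f` is always `σ`-symmetric and `T` multiplies
symmetric elements by `q`, which yields the quadratic Hecke relation `(T - q) (T + 1) = 0`.
Hence `T ∘ y ∘ T = x (T² - (q - 1) T) = q x`.
-/

/-- A Demazure–Lusztig operator with parameter `q` on a commutative ring `A` with an involution `σ`
exchanging `x` and `y`, where `T f` is the quotient of
`(q - 1) (x f - y σ(f)) + (x - y) σ(f)` by `x - y`. As `x - y` is only asked to be regular,
the quotient is encoded by its defining identity; additivity of `T` is then automatic. -/
structure IsDemazureLusztigOperator {A : Type*} [CommRing A]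
    (σ : A →+* A) (x y q : A) (T : A → A) : Prop where
  involutive : Function.Involutive σ
  map_left : σ x = y
  map_param : σ q = q
  isLeftRegular_sub : IsLeftRegular (x - y)
  sub_mul_apply (f : A) : (x - y) * T f = (q - 1) * (x * f - y * σ f) + (x - y) * σ f

namespace IsDemazureLusztigOperator

variable {A : Type*} [CommRing A] {σ : A →+* A} {x y q : A} {T : A → A}

lemma map_right (h : IsDemazureLusztigOperator σ x y q T) : σ y = x := by
  rw [← h.map_left, h.involutive]

lemma apply_right_mul (h : IsDemazureLusztigOperator σ x y q T) (f : A) :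
    T (y * f) = x * (T f - (q - 1) * f) := by
  have h_mul := h.sub_mul_apply (y * f)
  rw [map_mul, h.map_right] at h_mul
  apply h.isLeftRegular_sub
  linear_combination h_mul - x * h.sub_mul_apply f

lemma map_apply_add_self (h : IsDemazureLusztigOperator σ x y q T) (f : A) :
    σ (T f + f) = T f + f := by
  have h_map : (y - x) * σ (T f) = (q - 1) * (y * σ f - x * f) + (y - x) * f := by
    simpa only [map_mul, map_add, map_sub, map_one, h.map_left, h.map_right, h.map_param,
      h.involutive f] using congrArg σ (h.sub_mul_apply f)
  rw [map_add]
  apply h.isLeftRegular_sub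
  linear_combination -h_map - h.sub_mul_apply f

lemma apply_eq_mul_of_map_eq (h : IsDemazureLusztigOperator σ x y q T) {f : A} (hf : σ f = f) :
    T f = q * f := by
  have h_apply := h.sub_mul_apply f
  rw [hf] at h_apply
  apply h.isLeftRegular_sub
  linear_combination h_apply

lemma apply_add (h : IsDemazureLusztigOperator σ x y q T) (f g : A) :
    T (f + g) = T f + T g := by
  have h_add := h.sub_mul_apply (f + g)
  rw [map_add] at h_add
  apply h.isLeftRegular_sub
  linear_combination h_add - h.sub_mul_apply f - h.sub_mul_apply g

lemma apply_apply (h : IsDemazureLusztigOperator σ x y q T) (f : A) :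
    T (T f) = (q - 1) * T f + q * f := by
  have h_symm : T (T f + f) = q * (T f + f) := h.apply_eq_mul_of_map_eq (h.map_apply_add_self f)
  rw [h.apply_add] at h_symm
  linear_combination h_symm

end IsDemazureLusztigOperator

lemma rename_swap_involutive {ι K : Type*} [DecidableEq ι] [CommSemiring K] (i j : ι) :
    Function.Involutive (rename (Equiv.swap i j) : MvPolynomial ι K → MvPolynomial ι K) :=
  rename_leftInverse fun k ↦ Equiv.swap_apply_self i j k

lemma isLeftRegular_X_sub_X {ι K : Type*} [CommRing K] [IsDomain K] {i j : ι} (hij : i ≠ j) :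
    IsLeftRegular (X i - X j : MvPolynomial ι K) :=
  (IsRegular.of_ne_zero (sub_ne_zero.2 (X_injective.ne hij))).left

lemma IsDemazureLusztig.isDemazureLusztigOperator {N i : ℕ} {hi : i + 1 < N}
    {T : Pol N →ₗ[Frac] Pol N} (hT : IsDemazureLusztig N i hi T) :
    IsDemazureLusztigOperator
      (rename (Equiv.swap (⟨i, Nat.lt_of_succ_lt hi⟩ : Fin N) ⟨i + 1, hi⟩) : Pol N →ₐ[Frac] Pol N)
      (X ⟨i, Nat.lt_of_succ_lt hi⟩) (X ⟨i + 1, hi⟩) (C tF) T where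
  involutive := rename_swap_involutive _ _
  map_left := by simp
  map_param := by simp
  isLeftRegular_sub := isLeftRegular_X_sub_X (by simp)
  sub_mul_apply := hT

theorem stmt_18_general {A : Type*} [CommRing A] {σ : A →+* A} {x y q : A} {T : A → A}
    (hT : IsDemazureLusztigOperator σ x y q T) (f : A) :
    T (y * T f) = q * (x * f) :=
  calc
    T (y * T f) = x * (T (T f) - (q - 1) * T f) := hT.apply_right_mul (T f)
    _ = x * (q * f) := by rw [hT.apply_apply, add_sub_cancel_left]
    _ = q * (x * f) := mul_left_comm x q f

/-- the Bernstein–Lusztig-type relation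
`T_i(x_{i+1} · T_i(P)) = t · x_i · P`, i.e. `T_i ∘ X_{i+1} ∘ T_i = t·X_i` as operators. -/
theorem stmt_18 (N : ℕ) (hN : 2 ≤ N) (i : ℕ) (hi : i + 1 < N)
    (T : Pol N →ₗ[Frac] Pol N) (hT : IsDemazureLusztig N i hi T) (P : Pol N) :
    T (X (⟨i + 1, hi⟩ : Fin N) * T P) =
      C tF * (X (⟨i, Nat.lt_of_succ_lt hi⟩ : Fin N) * P) :=
  stmt_18_general hT.isDemazureLusztigOperator P
end
end
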